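/- arXiv:2404.13938 — 2 statements merged into one kernel-verified Lean document; each statement's English description precedes it below -/
import Mathlib

section
/- Let G be a finite group containing an element of order 8. Then G does not have the DCI property: there exist subsets S, T ⊆ G and a bijection e : G → G such that for all x, y ∈ G one has y·x⁻¹ ∈ S if and only if e(y)·e(x)⁻¹ ∈ T, yet there is no group automorphism α of G with α(S) = T. -/
/-!
Put `h = g ^ 2` and `z = h ^ 2 = g ^ 4`. Since `h` has even order, there is a set `A ⊆ G` such that
left multiplication by `h` exchanges `A` with its complement; left multiplication by `z` then
preserves `A`. Let `f` multiply by `z` on `A` and fix everything else. For `d` commuting with `z`,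
an arc `x → d * x` is sent to an arc labelled `d` or `z * d`, the latter exactly when `x` and
`d * x` are on different sides of `A`. Hence `f` preserves the arcs labelled by `{g, g ^ 5}` and
exchanges those labelled `g ^ 2` with those labelled `g ^ 6`, so it is an isomorphism of the Cayley
digraphs of `S = {g, g ^ 5, g ^ 2}` and `T = {g, g ^ 5, g ^ 6}`. No automorphism maps `S` onto `T`,
because `S` contains an element together with its square and `T` does not.
-/

section

variable {G : Type*} [Group G]

/-- The bijection `e` is an isomorphism of Cayley digraphs from `Cay(G, S)` to `Cay(G, T)`, where
the arcs are `x → s * x` for `s` in the connection set. -/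
def IsCayleyIso (S T : Set G) (e : G ≃ G) : Prop :=
  ∀ x y : G, y * x⁻¹ ∈ S ↔ e y * (e x)⁻¹ ∈ T

namespace IsCayleyIso

lemma union {S₁ T₁ S₂ T₂ : Set G} {e : G ≃ G} (h₁ : IsCayleyIso S₁ T₁ e)
    (h₂ : IsCayleyIso S₂ T₂ e) : IsCayleyIso (S₁ ∪ S₂) (T₁ ∪ T₂) e :=
  fun x y => or_congr (h₁ x y) (h₂ x y)

lemma of_involutive {S T : Set G} {f : G → G} (hf : f.Involutive)
    (hST : ∀ s ∈ S, ∀ x, f (s * x) * (f x)⁻¹ ∈ T)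
    (hTS : ∀ t ∈ T, ∀ x, f (t * x) * (f x)⁻¹ ∈ S) : IsCayleyIso S T hf.toPerm := by
  intro x y
  constructor <;> intro h
  · simpa using hST _ h x
  · simpa [hf x, hf y] using hTS _ h (f x)

end IsCayleyIso

lemma not_exists_mulEquiv_image_eq_of_pow_mem {S T : Set G} {x : G} {n : ℕ}
    (hx : x ∈ S) (hxn : x ^ n ∈ S) (hT : ∀ t ∈ T, t ^ n ∉ T) :
    ¬ ∃ α : G ≃* G, (α : G → G) '' S = T := by
  rintro ⟨α, rfl⟩
  exact hT (α x) ⟨x, hx, rfl⟩ ⟨x ^ n, hxn, map_pow α x n⟩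

lemma even_iff_even_of_zpow_eq_zpow {h : G} (hh : Even (orderOf h)) {a b : ℤ}
    (hab : h ^ a = h ^ b) : Even a ↔ Even b := by
  rw [← Int.even_sub, even_iff_two_dvd]
  exact (Int.natCast_dvd_natCast.2 hh.two_dvd).trans (orderOf_dvd_sub_iff_zpow_eq_zpow.2 hab)

-- `A` is the set of even powers of `h` times a transversal of the right cosets of `⟨h⟩`.
lemma exists_set_mul_mem_iff_notMem {h : G} (hh : Even (orderOf h)) :
    ∃ A : Set G, ∀ x, h * x ∈ A ↔ x ∉ A := by
  obtain ⟨R, hR, -⟩ := (Subgroup.zpowers h).exists_isComplement_right 1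
  let powerPart (x : G) : Subgroup.zpowers h := (hR.equiv x).fst
  have powerPart_mul (x : G) : (powerPart (h * x) : G) = h * powerPart x :=
    congrArg (fun u => (u.1 : G)) (hR.equiv_mul_left ⟨h, Subgroup.mem_zpowers h⟩ x)
  refine ⟨{x | ∃ k : ℤ, Even k ∧ h ^ k = powerPart x}, fun x => ?_⟩
  obtain ⟨n, hn : h ^ n = powerPart x⟩ := (powerPart x).2
  have mem_iff {y : G} {m : ℤ} (hm : h ^ m = powerPart y) :
      (∃ k : ℤ, Even k ∧ h ^ k = powerPart y) ↔ Even m :=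
    ⟨fun ⟨_, hk, hky⟩ => (even_iff_even_of_zpow_eq_zpow hh (hky.trans hm.symm)).1 hk,
      fun he => ⟨m, he, hm⟩⟩
  have hn_succ : h ^ (n + 1) = powerPart (h * x) := by rw [powerPart_mul, ← hn, mul_self_zpow]
  simp only [Set.mem_ofPred_eq, mem_iff hn, mem_iff hn_succ, Int.even_add_one]

open Classical in
/-- The map which multiplies the elements of `A` by `z` on the left and fixes all others; it
serves as the isomorphism between two Cayley digraphs. -/
noncomputable def mulLeftOn (z : G) (A : Set G) (x : G) : G :=
  if x ∈ A then z * x else x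

section MulLeftOn

variable {z d x : G} {A : Set G}

lemma mulLeftOn_of_mem (hx : x ∈ A) : mulLeftOn z A x = z * x := if_pos hx

lemma mulLeftOn_of_notMem (hx : x ∉ A) : mulLeftOn z A x = x := if_neg hx

lemma mulLeftOn_involutive (hz : z * z = 1) (hA : ∀ x, z * x ∈ A ↔ x ∈ A) :
    (mulLeftOn z A).Involutive := by
  intro x
  by_cases hx : x ∈ A
  · rw [mulLeftOn_of_mem hx, mulLeftOn_of_mem ((hA x).2 hx), ← mul_assoc, hz, one_mul]
  · rw [mulLeftOn_of_notMem hx, mulLeftOn_of_notMem hx]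

lemma mulLeftOn_mul_of_mem_iff (hzd : Commute z d) (hx : d * x ∈ A ↔ x ∈ A) :
    mulLeftOn z A (d * x) = d * mulLeftOn z A x := by
  by_cases hxA : x ∈ A
  · rw [mulLeftOn_of_mem hxA, mulLeftOn_of_mem (hx.2 hxA), hzd.left_comm]
  · rw [mulLeftOn_of_notMem hxA, mulLeftOn_of_notMem (mt hx.1 hxA)]

lemma mulLeftOn_mul_of_mem_iff_notMem (hz : z * z = 1) (hzd : Commute z d)
    (hx : d * x ∈ A ↔ x ∉ A) : mulLeftOn z A (d * x) = z * d * mulLeftOn z A x := by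
  by_cases hxA : x ∈ A
  · rw [mulLeftOn_of_mem hxA, mulLeftOn_of_notMem (fun h => hx.1 h hxA), hzd.eq, mul_assoc,
      ← mul_assoc z, hz, one_mul]
  · rw [mulLeftOn_of_notMem hxA, mulLeftOn_of_mem (hx.2 hxA), mul_assoc]

lemma isCayleyIso_mulLeftOn_self {D : Set G} (hz : z * z = 1) (hA : ∀ x, z * x ∈ A ↔ x ∈ A)
    (hzD : ∀ d ∈ D, Commute z d) (hD : ∀ d ∈ D, z * d ∈ D) :
    IsCayleyIso D D (mulLeftOn_involutive hz hA).toPerm := by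
  have arc_mem : ∀ d ∈ D, ∀ x, mulLeftOn z A (d * x) * (mulLeftOn z A x)⁻¹ ∈ D := by
    intro d hd x
    by_cases hx : d * x ∈ A ↔ x ∈ A
    · simpa [mulLeftOn_mul_of_mem_iff (hzD d hd) hx] using hd
    · have hx' : d * x ∈ A ↔ x ∉ A := by tauto
      simpa [mulLeftOn_mul_of_mem_iff_notMem hz (hzD d hd) hx'] using hD d hd
  exact .of_involutive _ arc_mem arc_mem

lemma isCayleyIso_mulLeftOn_singleton (hz : z * z = 1) (hA : ∀ x, z * x ∈ A ↔ x ∈ A)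
    (hzd : Commute z d) (hd : ∀ x, d * x ∈ A ↔ x ∉ A) :
    IsCayleyIso {d} {z * d} (mulLeftOn_involutive hz hA).toPerm := by
  refine .of_involutive _ ?_ ?_
  · rintro _ rfl x
    simp [mulLeftOn_mul_of_mem_iff_notMem hz hzd (hd x)]
  · rintro _ rfl x
    have hx : z * d * x ∈ A ↔ x ∉ A := by rw [mul_assoc, hA, hd]
    have hzzd : Commute z (z * d) := (Commute.refl z).mul_right hzd
    simp [mulLeftOn_mul_of_mem_iff_notMem hz hzzd hx, ← mul_assoc, hz]

end MulLeftOn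

lemma exists_isCayleyIso_of_orderOf_eq_eight {g : G} (hg : orderOf g = 8) :
    ∃ e : G ≃ G, IsCayleyIso ({g, g ^ 5} ∪ {g ^ 2}) ({g, g ^ 5} ∪ {g ^ 6}) e := by
  have g_pow_eight : g ^ 8 = 1 := hg ▸ pow_orderOf_eq_one g
  have even_order : Even (orderOf (g ^ 2)) := by
    rw [orderOf_pow' g two_ne_zero, hg]
    decide
  obtain ⟨A, hA⟩ := exists_set_mul_mem_iff_notMem even_order
  have hz : g ^ 4 * g ^ 4 = 1 := by rw [← pow_add, g_pow_eight]
  have hzA (x : G) : g ^ 4 * x ∈ A ↔ x ∈ A := by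
    rw [pow_add g 2 2, mul_assoc, hA, hA, not_not]
  have z_mul_g : g ^ 4 * g = g ^ 5 := (pow_succ g 4).symm
  have z_mul_g_pow_five : g ^ 4 * g ^ 5 = g := by rw [← z_mul_g, ← mul_assoc, hz, one_mul]
  have z_mul_g_sq : g ^ 4 * g ^ 2 = g ^ 6 := (pow_add g 4 2).symm
  have odd_part : IsCayleyIso {g, g ^ 5} {g, g ^ 5} _ :=
    isCayleyIso_mulLeftOn_self hz hzA
      (by rintro _ (rfl | rfl); exacts [.pow_self _ _, .pow_pow_self _ _ _])
      (by rintro _ (rfl | rfl); exacts [.inr z_mul_g, .inl z_mul_g_pow_five])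
  have even_part := isCayleyIso_mulLeftOn_singleton hz hzA (.pow_pow_self g 4 2) hA
  rw [z_mul_g_sq] at even_part
  exact ⟨_, odd_part.union even_part⟩

lemma sq_notMem_of_orderOf_eq_eight {g : G} (hg : orderOf g = 8) :
    ∀ t ∈ ({g, g ^ 5} ∪ {g ^ 6} : Set G), t ^ 2 ∉ ({g, g ^ 5} ∪ {g ^ 6} : Set G) := by
  have pow_eq_pow_iff (m n : ℕ) : g ^ m = g ^ n ↔ m % 8 = n % 8 := hg ▸ pow_inj_mod
  have pow_eq_self_iff (m : ℕ) : g ^ m = g ↔ m % 8 = 1 := by simpa using pow_eq_pow_iff m 1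
  rintro _ ((rfl | rfl) | rfl) <;>
    simp [← pow_mul, pow_eq_pow_iff, pow_eq_self_iff]

theorem not_DCI_of_orderOf_eq_eight_general (g : G) (hg : orderOf g = 8) :
    ∃ (S T : Set G) (e : G ≃ G),
      (∀ x y : G, y * x⁻¹ ∈ S ↔ e y * (e x)⁻¹ ∈ T) ∧
      ¬ ∃ α : G ≃* G, (α : G → G) '' S = T := by
  obtain ⟨e, he⟩ := exists_isCayleyIso_of_orderOf_eq_eight hg
  have g_mem : g ∈ ({g, g ^ 5} ∪ {g ^ 2} : Set G) := by simp
  have g_sq_mem : g ^ 2 ∈ ({g, g ^ 5} ∪ {g ^ 2} : Set G) := by simp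
  exact ⟨_, _, e, he,
    not_exists_mulEquiv_image_eq_of_pow_mem g_mem g_sq_mem (sq_notMem_of_orderOf_eq_eight hg)⟩

end

/-- Let `G` be a finite group containing an element of order `8`.  Then `G` does not have
the DCI property: there exist subsets `S, T ⊆ G` and a bijection `e : G → G` such that for
all `x, y ∈ G` one has `y * x⁻¹ ∈ S ↔ e y * (e x)⁻¹ ∈ T`, yet there is no group
automorphism `α` of `G` with `α '' S = T`. -/
theorem not_DCI_of_orderOf_eq_eight {G : Type*} [Group G] [Fintype G]
    (g : G) (hg : orderOf g = 8) :
    ∃ (S T : Set G) (e : G ≃ G),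
      (∀ x y : G, y * x⁻¹ ∈ S ↔ e y * (e x)⁻¹ ∈ T) ∧
      ¬ ∃ α : G ≃* G, (α : G → G) '' S = T :=
  not_DCI_of_orderOf_eq_eight_general g hg
end

section
/- With the notation of the concrete construction (Ω = ZMod 8 × ZMod k × ZMod r with k odd and r ∈ {1,3}): the subgroup R₂ = ⟨τ₂,ρ₁,ρ₂⟩ of Sym(Ω) acts regularly on Ω, i.e., for all ω, ω' ∈ Ω there is exactly one element of R₂ mapping ω to ω'. -/
open Equiv

instance : DecidablePred (Even : ZMod 8 → Prop) := fun i =>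
  decidable_of_iff (∃ x : ZMod 8, i = x + x) Iff.rfl

/-- The permutation of `ZMod 8` given by the 8-cycle (0 1 2 3 4 5 6 7). -/
def sigma1 : Equiv.Perm (ZMod 8) := Equiv.addRight (1 : ZMod 8)

/-- The permutation of `ZMod 8` given by the 8-cycle (0 1 6 7 4 5 2 3). -/
def sigma2 : Equiv.Perm (ZMod 8) where
  toFun i := if Even i then i + 1 else i + 5
  invFun i := if Even i then i + 3 else i - 1
  left_inv := by decide
  right_inv := by decide

def tau1 (k r : ℕ) : Equiv.Perm (ZMod 8 × ZMod k × ZMod r) :=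
  sigma1.prodCongr (Equiv.refl _)

def tau2 (k r : ℕ) : Equiv.Perm (ZMod 8 × ZMod k × ZMod r) :=
  sigma2.prodCongr (Equiv.refl _)

def rho1 (k r : ℕ) : Equiv.Perm (ZMod 8 × ZMod k × ZMod r) where
  toFun x := if Even x.1 then (x.1, x.2.1 + 1, x.2.2) else (x.1, x.2.1 - 1, x.2.2)
  invFun x := if Even x.1 then (x.1, x.2.1 - 1, x.2.2) else (x.1, x.2.1 + 1, x.2.2)
  left_inv := by rintro ⟨i, j, l⟩; by_cases h : Even i <;> simp [h]
  right_inv := by rintro ⟨i, j, l⟩; by_cases h : Even i <;> simp [h]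

def rho2 (k r : ℕ) : Equiv.Perm (ZMod 8 × ZMod k × ZMod r) where
  toFun x := if Even x.1 then (x.1, x.2.1, x.2.2 + 1) else (x.1, x.2.1, x.2.2 - 1)
  invFun x := if Even x.1 then (x.1, x.2.1, x.2.2 - 1) else (x.1, x.2.1, x.2.2 + 1)
  left_inv := by rintro ⟨i, j, l⟩; by_cases h : Even i <;> simp [h]
  right_inv := by rintro ⟨i, j, l⟩; by_cases h : Even i <;> simp [h]

/-- The permutation of `ZMod 8 × ZMod k × ZMod r` acting on the first coordinate as the
product of transpositions (1 5)(3 7) and fixing the other coordinates. -/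
def hperm (k r : ℕ) : Equiv.Perm (ZMod 8 × ZMod k × ZMod r) :=
  ((Equiv.swap (1 : ZMod 8) 5).trans (Equiv.swap (3 : ZMod 8) 7)).prodCongr (Equiv.refl _)

def R1 (k r : ℕ) : Subgroup (Equiv.Perm (ZMod 8 × ZMod k × ZMod r)) :=
  Subgroup.closure {tau1 k r, rho1 k r, rho2 k r}

def R2 (k r : ℕ) : Subgroup (Equiv.Perm (ZMod 8 × ZMod k × ZMod r)) :=
  Subgroup.closure {tau2 k r, rho1 k r, rho2 k r}

def Ggrp (k r : ℕ) : Subgroup (Equiv.Perm (ZMod 8 × ZMod k × ZMod r)) :=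
  R1 k r ⊔ R2 k r

def Hgrp (k r : ℕ) : Subgroup (Equiv.Perm (ZMod 8 × ZMod k × ZMod r)) :=
  Subgroup.closure {tau1 k r, tau2 k r}

/-!
A permutation group `K` acts freely as soon as its centralizer is transitive: if `g, h ∈ K` agree at
`x`, they agree at `c x` for every `c` commuting with both. So it suffices that `R₂` and its
centralizer are both transitive.

Regard `Ω` as `ZMod 8 × A` with `A = ZMod k × ZMod r`. Since `(1, 0)` and `(0, 1)` generate `A`,
`⟨ρ₁, ρ₂⟩` consists of the maps `(i, x) ↦ (i, x + (-1)^i a)`, which are transitive on every fibre,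
and `τ₂` permutes the fibres transitively. The plain translations `(i, x) ↦ (i, x + a)` centralize
`R₂`, and so does `(i, x) ↦ (σ₂ i, -x)`, because `σ₂` changes the parity of `i`; these again
generate a transitive group.
-/

section Regular

open MulAction

variable {G H α : Type*}

theorem existsUnique_smul_eq [SMul G α] [IsPretransitive G α] [IsCancelSMul G α] (x y : α) :
    ∃! g : G, g • x = y := by
  obtain ⟨g, hg⟩ := exists_smul_eq G x y
  exact ⟨g, hg, fun g' hg' ↦ IsCancelSMul.right_cancel _ _ x (hg'.trans hg.symm)⟩

theorem isCancelSMul_of_smulCommClass [Group G] [MulAction G α] [FaithfulSMul G α] [SMul H α]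
    [SMulCommClass G H α] [IsPretransitive H α] : IsCancelSMul G α where
  right_cancel' g g' x hx := by
    refine eq_of_smul_eq_smul fun y : α ↦ ?_
    obtain ⟨c, rfl⟩ := exists_smul_eq H x y
    rw [smul_comm, smul_comm g', hx]

theorem existsUnique_mem_apply_eq_of_isPretransitive_centralizer {K : Subgroup (Perm α)}
    [IsPretransitive K α] [IsPretransitive (Subgroup.centralizer (K : Set (Perm α))) α]
    (x y : α) : ∃! g : Perm α, g ∈ K ∧ g x = y := by
  have : SMulCommClass K (Subgroup.centralizer (K : Set (Perm α))) α :=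
    ⟨fun g c z ↦ DFunLike.congr_fun (c.2 g g.2) z⟩
  have : IsCancelSMul K α :=
    isCancelSMul_of_smulCommClass (H := Subgroup.centralizer (K : Set (Perm α)))
  obtain ⟨g, hg, g_unique⟩ := existsUnique_smul_eq (G := K) x y
  exact ⟨g, ⟨g.2, hg⟩, fun g' hg' ↦ congr_arg Subtype.val (g_unique ⟨g', hg'.1⟩ hg'.2)⟩

end Regular

theorem prodCongr_zpow {α β : Type*} (σ : Perm α) (f : Perm β) (n : ℤ) :
    (σ.prodCongr f : Perm (α × β)) ^ n = (σ ^ n).prodCongr (f ^ n) :=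
  (map_zpow (MonoidHom.mk' (fun p : Perm α × Perm β ↦ (p.1.prodCongr p.2 : Perm (α × β)))
    fun _ _ ↦ rfl) (σ, f) n).symm

section TwistedTranslation

variable {ι A M : Type*} [AddCommGroup A] [Group M] [DistribMulAction M A]

/-- The action of `A` on `ι × A` in which `a` translates the fibre over `i` by `ε i • a`. Signs
`ε i = ±1` give the maps `ρ₁`, `ρ₂` and their products, `ε = 1` gives the plain translations. -/
def twistedTranslation (ε : ι → M) : Multiplicative A →* Perm (ι × A) where
  toFun a := prodShear (Equiv.refl ι) fun i ↦ Equiv.addRight (ε i • a.toAdd)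
  map_one' := by ext x <;> simp
  map_mul' a b := by ext x <;> simp [add_assoc, add_comm (ε x.1 • a.toAdd)]

@[simp]
theorem twistedTranslation_apply (ε : ι → M) (a : Multiplicative A) (x : ι × A) :
    twistedTranslation ε a x = (x.1, x.2 + ε x.1 • a.toAdd) := rfl

theorem commute_twistedTranslation (ε ε' : ι → M) (a b : Multiplicative A) :
    Commute (twistedTranslation ε a) (twistedTranslation ε' b) := by
  ext x <;> simp [add_right_comm]

theorem commute_prodCongr_twistedTranslation {σ : Perm ι} {ε : ι → M} {δ : M}
    (hε : ∀ i, ε (σ i) = δ * ε i) (a : Multiplicative A) :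
    Commute (σ.prodCongr (MulAction.toPerm δ)) (twistedTranslation ε a) := by
  ext x <;> simp [hε, mul_smul]

theorem isPretransitive_of_twistedTranslation_mem {K : Subgroup (Perm (ι × A))} {σ : Perm ι}
    {f : Perm A} {ε : ι → M} (hσ : ∀ i j, σ.SameCycle i j) (hσf : σ.prodCongr f ∈ K)
    (hε : ∀ a, twistedTranslation ε a ∈ K) : MulAction.IsPretransitive K (ι × A) where
  exists_smul_eq := by
    rintro ⟨i, x⟩ ⟨j, y⟩
    obtain ⟨n, hn⟩ := hσ i j
    let a := Multiplicative.ofAdd ((ε j)⁻¹ • (y - (f ^ n) x))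
    refine ⟨⟨_, mul_mem (hε a) (zpow_mem hσf n)⟩, ?_⟩
    simp [Subgroup.smul_def, prodCongr_zpow, hn, a]

variable (A) in
/-- The subgroup of `Perm (ι × A)` generated by `σ`, acting on the first coordinate, and the
`ε`-twisted translations. The group `R₂` is of this kind. -/
def twistedGroup (σ : Perm ι) (ε : ι → M) : Subgroup (Perm (ι × A)) :=
  Subgroup.zpowers (σ.prodCongr (Equiv.refl A)) ⊔ (twistedTranslation ε).range

theorem isPretransitive_twistedGroup {σ : Perm ι} (hσ : ∀ i j, σ.SameCycle i j) (ε : ι → M) :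
    MulAction.IsPretransitive (twistedGroup A σ ε) (ι × A) :=
  isPretransitive_of_twistedTranslation_mem hσ
    (Subgroup.mem_sup_left (Subgroup.mem_zpowers _))
    fun a ↦ Subgroup.mem_sup_right ⟨a, rfl⟩

theorem mem_centralizer_twistedGroup {σ : Perm ι} {ε : ι → M} {c : Perm (ι × A)}
    (hσ : Commute (σ.prodCongr (Equiv.refl A)) c)
    (hε : ∀ a, Commute (twistedTranslation ε a) c) :
    c ∈ Subgroup.centralizer (twistedGroup A σ ε : Set (Perm (ι × A))) := by
  have twistedGroup_le : twistedGroup A σ ε ≤ Subgroup.centralizer {c} := by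
    refine sup_le (Subgroup.zpowers_le.2 (Subgroup.mem_centralizer_singleton_iff.2 hσ)) ?_
    rintro _ ⟨a, rfl⟩
    exact Subgroup.mem_centralizer_singleton_iff.2 (hε a)
  exact Subgroup.mem_centralizer_iff.2 fun g hg ↦
    Subgroup.mem_centralizer_singleton_iff.1 (twistedGroup_le hg)

theorem isPretransitive_centralizer_twistedGroup {σ : Perm ι} {ε : ι → M} {δ : M}
    (hσ : ∀ i j, σ.SameCycle i j) (hε : ∀ i, ε (σ i) = δ * ε i) :
    MulAction.IsPretransitive
      (Subgroup.centralizer (twistedGroup A σ ε : Set (Perm (ι × A)))) (ι × A) := by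
  have twist_mem : σ.prodCongr (MulAction.toPerm δ) ∈
      Subgroup.centralizer (twistedGroup A σ ε : Set (Perm (ι × A))) :=
    mem_centralizer_twistedGroup rfl
      fun a ↦ (commute_prodCongr_twistedTranslation hε a).symm
  have translation_mem (a : Multiplicative A) : twistedTranslation (1 : ι → M) a ∈
      Subgroup.centralizer (twistedGroup A σ ε : Set (Perm (ι × A))) :=
    mem_centralizer_twistedGroup (by ext x <;> simp)
      fun b ↦ commute_twistedTranslation ε 1 b a
  exact isPretransitive_of_twistedTranslation_mem hσ twist_mem translation_mem

theorem existsUnique_mem_twistedGroup_apply_eq {σ : Perm ι} {ε : ι → M} {δ : M}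
    (hσ : ∀ i j, σ.SameCycle i j) (hε : ∀ i, ε (σ i) = δ * ε i) (x y : ι × A) :
    ∃! g : Perm (ι × A), g ∈ twistedGroup A σ ε ∧ g x = y :=
  have := isPretransitive_twistedGroup (A := A) hσ ε
  have := isPretransitive_centralizer_twistedGroup (A := A) hσ hε
  existsUnique_mem_apply_eq_of_isPretransitive_centralizer x y

end TwistedTranslation

/-- The sign `(-1)^i`, which makes sense for `i` modulo `8` because `8` is even. -/
def paritySign (i : ZMod 8) : ℤˣ := if Even i then 1 else -1

theorem paritySign_sigma2 : ∀ i : ZMod 8, paritySign (sigma2 i) = -1 * paritySign i := by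
  decide

theorem sameCycle_sigma2 : ∀ i j : ZMod 8, sigma2.SameCycle i j := by
  decide

theorem closure_ofAdd_prod_zmod_eq_top (k r : ℕ) :
    Subgroup.closure {Multiplicative.ofAdd ((1, 0) : ZMod k × ZMod r),
      Multiplicative.ofAdd (0, 1)} = ⊤ := by
  refine eq_top_iff.2 fun a _ ↦ Subgroup.mem_closure_pair.2 ?_
  obtain ⟨m, hm⟩ := ZMod.intCast_surjective a.toAdd.1
  obtain ⟨n, hn⟩ := ZMod.intCast_surjective a.toAdd.2
  exact ⟨m, n, Multiplicative.toAdd.injective (by simp [hm, hn])⟩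

theorem rho1_eq_twistedTranslation (k r : ℕ) :
    rho1 k r = twistedTranslation paritySign (Multiplicative.ofAdd (1, 0)) := by
  ext ⟨i, x⟩ : 1
  by_cases hi : Even i <;> simp [rho1, paritySign, hi, Prod.ext_iff, sub_eq_add_neg]

theorem rho2_eq_twistedTranslation (k r : ℕ) :
    rho2 k r = twistedTranslation paritySign (Multiplicative.ofAdd (0, 1)) := by
  ext ⟨i, x⟩ : 1
  by_cases hi : Even i <;> simp [rho2, paritySign, hi, Prod.ext_iff, sub_eq_add_neg]

theorem R2_eq_twistedGroup (k r : ℕ) :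
    R2 k r = twistedGroup (ZMod k × ZMod r) sigma2 paritySign := by
  have range_eq : (twistedTranslation (A := ZMod k × ZMod r) paritySign).range =
      Subgroup.closure {rho1 k r, rho2 k r} := by
    rw [MonoidHom.range_eq_map, ← closure_ofAdd_prod_zmod_eq_top, MonoidHom.map_closure,
      Set.image_pair, rho1_eq_twistedTranslation, rho2_eq_twistedTranslation]
  rw [R2, twistedGroup, range_eq, Set.insert_eq, Subgroup.closure_union,
    ← Subgroup.zpowers_eq_closure, tau2]

theorem R2_regular_general (k r : ℕ) :
    ∀ ω ω' : ZMod 8 × ZMod k × ZMod r,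
      ∃! g : Equiv.Perm (ZMod 8 × ZMod k × ZMod r), g ∈ R2 k r ∧ g ω = ω' := by
  rw [R2_eq_twistedGroup]
  exact existsUnique_mem_twistedGroup_apply_eq sameCycle_sigma2 paritySign_sigma2

/-- `R₂ = ⟨τ₂, ρ₁, ρ₂⟩` acts regularly on `Ω`: for all `ω, ω' ∈ Ω` there is exactly one
element of `R₂` mapping `ω` to `ω'`. -/
theorem R2_regular (k r : ℕ) (hk0 : 0 < k) (hk : Odd k) (hr : r = 1 ∨ r = 3) :
    ∀ ω ω' : ZMod 8 × ZMod k × ZMod r,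
      ∃! g : Equiv.Perm (ZMod 8 × ZMod k × ZMod r), g ∈ R2 k r ∧ g ω = ω' :=
  R2_regular_general k r
end
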